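/- Let X and Y be Banach spaces and suppose the pair (X, Y) has the BPBp for compact operators. Then: (a) for every σ-finite measure space (Ω, Σ, μ), the pair (X, L_∞(μ, Y)) has the BPBp for compact operators; and (b) for every compact Hausdorff topological space K, the pair (X, C(K, Y)) has the BPBp for compact operators. -/

import Mathlib

open MeasureTheory

noncomputable section

/-- A pair `(X, Y)` of normed spaces has the Bishop–Phelps–Bollobás property for compact
operators with the function `η`. -/
def BPBpCompactWith (𝕜 : Type*) [RCLike 𝕜] (X Y : Type*) [NormedAddCommGroup X]
    [NormedSpace 𝕜 X] [NormedAddCommGroup Y] [NormedSpace 𝕜 Y] (η : ℝ → ℝ) : Prop :=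
  ∀ ε : ℝ, 0 < ε → 0 < η ε ∧
    ∀ T : X →L[𝕜] Y, IsCompactOperator T → ‖T‖ = 1 →
      ∀ x₀ : X, ‖x₀‖ = 1 → 1 - η ε < ‖T x₀‖ →
        ∃ S : X →L[𝕜] Y, ∃ x₁ : X, IsCompactOperator S ∧ ‖S‖ = 1 ∧ ‖x₁‖ = 1 ∧
          ‖S x₁‖ = 1 ∧ ‖x₀ - x₁‖ < ε ∧ ‖S - T‖ < ε

/-- A pair `(X, Y)` has the Bishop–Phelps–Bollobás property for compact operators. -/
def BPBpCompact (𝕜 : Type*) [RCLike 𝕜] (X Y : Type*) [NormedAddCommGroup X]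
    [NormedSpace 𝕜 X] [NormedAddCommGroup Y] [NormedSpace 𝕜 Y] : Prop :=
  ∃ η : ℝ → ℝ, BPBpCompactWith 𝕜 X Y η
open scoped ENNReal

/-!
Given a compact `T : X → Z` almost attaining its norm at `x₀`, where `Z` is `C(K, Y)` or
`L_∞(μ, Y)`, let `R : X → Y` be the evaluation of `T` at a point where the function `T x₀` nearly
peaks. The property of `(X, Y)` replaces `R` by a nearby `S` attaining its norm near `x₀`, and `S`
is spliced back into `T` on a region around that point where, by compactness, all the functions
`T x` with `‖x‖ ≤ 1` are nearly constant.

Classes in `L_∞(μ, Y)` have no values at points, so the evaluation is taken as a limit along a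
filter finer than `ae μ`. Such a filter exists because the range of `T` is separable: countably many
strongly measurable functions are continuous for a second countable topology on `Ω`, in which every
set of positive measure has a point all of whose neighbourhoods meet it in positive measure.
-/

open Filter Topology

section CompactOperators

variable {𝕜 X Y Z : Type*} [NontriviallyNormedField 𝕜]
  [NormedAddCommGroup X] [NormedSpace 𝕜 X] [NormedAddCommGroup Y] [NormedSpace 𝕜 Y]
  [NormedAddCommGroup Z] [NormedSpace 𝕜 Z] {T : X →L[𝕜] Z}

theorem exists_finset_norm_map_sub_lt (hT : IsCompactOperator T) {δ : ℝ} (hδ : 0 < δ) :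
    ∃ s : Finset X, ∀ x, ‖x‖ ≤ 1 → ∃ a ∈ s, ‖T x - T a‖ < δ := by
  classical
  obtain ⟨t, ht, htfin, hcover⟩ := exists_finite_cover_balls_of_isCompact_closure
    (hT.isCompact_closure_image_closedBall (f := (T : X →ₗ[𝕜] Z)) 1) hδ
  lift t to Finset Z using htfin
  obtain ⟨s, -, rfl⟩ := Finset.subset_set_image_iff.1 ht
  refine ⟨s, fun x hx => ?_⟩
  simpa [dist_eq_norm] using hcover ⟨x, by simpa using hx, rfl⟩

theorem isCompactOperator_of_norm_le [CompleteSpace Y] (hT : IsCompactOperator T)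
    {R : X →L[𝕜] Y} (hR : ∀ x, ‖R x‖ ≤ ‖T x‖) : IsCompactOperator R := by
  rw [← ContinuousLinearMap.coe_coe,
    isCompactOperator_iff_isCompact_closure_image_closedBall _ one_pos]
  refine TotallyBounded.isCompact_of_isClosed (.closure ?_) isClosed_closure
  refine Metric.totallyBounded_iff.2 fun δ hδ => ?_
  obtain ⟨s, hs⟩ := exists_finset_norm_map_sub_lt hT hδ
  refine ⟨R '' s, s.finite_toSet.image R, ?_⟩
  rintro _ ⟨x, hx, rfl⟩
  obtain ⟨a, ha, hxa⟩ := hs x (by simpa using hx)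
  refine Set.mem_biUnion ⟨a, ha, rfl⟩ ?_
  rw [Metric.mem_ball, dist_eq_norm]
  calc ‖R x - R a‖ = ‖R (x - a)‖ := by rw [map_sub]
    _ ≤ ‖T (x - a)‖ := hR _
    _ < δ := by rwa [map_sub]

theorem isSeparable_range_of_isCompactOperator (hT : IsCompactOperator T) :
    TopologicalSpace.IsSeparable (Set.range T) := by
  have hball (n : ℕ) : TopologicalSpace.IsSeparable (T '' Metric.closedBall 0 n) :=
    (hT.isCompact_closure_image_closedBall (f := (T : X →ₗ[𝕜] Z)) n).isSeparable.mono
      subset_closure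
  refine (TopologicalSpace.IsSeparable.iUnion hball).mono ?_
  rw [← Set.image_iUnion, Metric.iUnion_closedBall_nat, Set.image_univ]

end CompactOperators

section Splicing

variable {𝕜 : Type*} [RCLike 𝕜] {X Y Z : Type*}
  [NormedAddCommGroup X] [NormedSpace 𝕜 X] [NormedAddCommGroup Y] [NormedSpace 𝕜 Y]
  [NormedAddCommGroup Z] [NormedSpace 𝕜 Z]

/-- A splicing of `Y` into `Z`: the element `P z + J y` is thought of as the function `z`, damped
by `P` near a point, with the value `y` inserted there by `J`. -/
structure IsSplicing (P : Z →L[𝕜] Z) (J : Y →L[𝕜] Z) : Prop where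
  le_norm : ∀ z y, ‖y‖ ≤ ‖P z + J y‖
  norm_le : ∀ z y, ‖P z + J y‖ ≤ max ‖z‖ ‖y‖

namespace IsSplicing

variable {P : Z →L[𝕜] Z} {J : Y →L[𝕜] Z}

theorem norm_apply_eq (h : IsSplicing P J) (y : Y) : ‖J y‖ = ‖y‖ :=
  le_antisymm (by simpa using h.norm_le 0 y) (by simpa using h.le_norm 0 y)

theorem norm_comp_add_comp_le (h : IsSplicing P J) (T : X →L[𝕜] Z) (S : X →L[𝕜] Y) :
    ‖P ∘L T + J ∘L S‖ ≤ max ‖T‖ ‖S‖ := by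
  refine ContinuousLinearMap.opNorm_le_of_unit_norm (le_max_of_le_left (norm_nonneg _))
    fun x hx => (h.norm_le (T x) (S x)).trans (max_le_max ?_ ?_)
  · exact T.unit_le_opNorm x hx.le
  · exact S.unit_le_opNorm x hx.le

theorem norm_comp_add_comp_sub_le (h : IsSplicing P J) (T : X →L[𝕜] Z) (R S : X →L[𝕜] Y) :
    ‖P ∘L T + J ∘L S - T‖ ≤ ‖P ∘L T + J ∘L R - T‖ + ‖S - R‖ := by
  have hJ : ‖J ∘L (S - R)‖ ≤ ‖S - R‖ :=
    ContinuousLinearMap.opNorm_le_bound _ (norm_nonneg _) fun x =>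
      (h.norm_apply_eq _).trans_le ((S - R).le_opNorm x)
  calc ‖P ∘L T + J ∘L S - T‖ = ‖(P ∘L T + J ∘L R - T) + J ∘L (S - R)‖ := by
        rw [ContinuousLinearMap.comp_sub]; congr 1; abel
    _ ≤ ‖P ∘L T + J ∘L R - T‖ + ‖J ∘L (S - R)‖ := norm_add_le _ _
    _ ≤ ‖P ∘L T + J ∘L R - T‖ + ‖S - R‖ := by gcongr

theorem norm_comp_add_comp_sub_le_of_net (h : IsSplicing P J) {T : X →L[𝕜] Z} {R : X →L[𝕜] Y}
    (hR : ∀ x, ‖R x‖ ≤ ‖T x‖) {s : Finset X} {δ : ℝ} (hδ : 0 ≤ δ)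
    (hs : ∀ x, ‖x‖ ≤ 1 → ∃ a ∈ s, ‖T x - T a‖ < δ)
    (hsδ : ∀ a ∈ s, ‖P (T a) + J (R a) - T a‖ ≤ δ) :
    ‖P ∘L T + J ∘L R - T‖ ≤ 3 * δ := by
  refine ContinuousLinearMap.opNorm_le_of_unit_norm (by positivity) fun x hx => ?_
  obtain ⟨a, ha, hxa⟩ := hs x hx.le
  rw [← map_sub] at hxa
  have hsplice : ‖P (T (x - a)) + J (R (x - a))‖ ≤ ‖T (x - a)‖ :=
    (h.norm_le _ _).trans_eq (max_eq_left (hR _))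
  calc ‖P (T x) + J (R x) - T x‖
      = ‖(P (T (x - a)) + J (R (x - a))) + (P (T a) + J (R a) - T a) - T (x - a)‖ := by
        simp only [map_sub]; congr 1; abel
    _ ≤ ‖P (T (x - a)) + J (R (x - a))‖ + ‖P (T a) + J (R a) - T a‖ + ‖T (x - a)‖ :=
        (norm_sub_le _ _).trans (add_le_add_left (norm_add_le _ _) _)
    _ ≤ 3 * δ := by linarith [hsδ a ha]

end IsSplicing

variable (𝕜 X Y Z) in
/-- Every compact operator `T : X → Z` admits, for each `x₀` with `T x₀ ≠ 0`, an approximate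
evaluation `R : X → Y` at a point where the function `T x₀` nearly peaks, together with a splicing
which reinserts the values `R x` into `T x` almost without changing it, for `x` in a given finite
set. -/
def HasPeakSplicings : Prop :=
  ∀ T : X →L[𝕜] Z, IsCompactOperator T → ∀ x₀, T x₀ ≠ 0 → ∀ (s : Finset X) (δ : ℝ), 0 < δ →
    ∃ (R : X →L[𝕜] Y) (P : Z →L[𝕜] Z) (J : Y →L[𝕜] Z), IsSplicing P J ∧
      (∀ x, ‖R x‖ ≤ ‖T x‖) ∧ ‖T x₀‖ - δ ≤ ‖R x₀‖ ∧ ∀ x ∈ s, ‖P (T x) + J (R x) - T x‖ ≤ δ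

theorem HasPeakSplicings.exists_norm_comp_add_comp_sub_le (hZ : HasPeakSplicings 𝕜 X Y Z)
    {T : X →L[𝕜] Z} (hT : IsCompactOperator T) {x₀ : X} (hx₀ : T x₀ ≠ 0) {δ : ℝ} (hδ : 0 < δ) :
    ∃ (R : X →L[𝕜] Y) (P : Z →L[𝕜] Z) (J : Y →L[𝕜] Z), IsSplicing P J ∧
      (∀ x, ‖R x‖ ≤ ‖T x‖) ∧ ‖T x₀‖ - δ ≤ ‖R x₀‖ ∧ ‖P ∘L T + J ∘L R - T‖ ≤ δ := by
  have hδ3 : 0 < δ / 3 := by positivity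
  obtain ⟨s, hs⟩ := exists_finset_norm_map_sub_lt hT hδ3
  obtain ⟨R, P, J, hPJ, hR, hpeak, hsδ⟩ := hZ T hT x₀ hx₀ s (δ / 3) hδ3
  refine ⟨R, P, J, hPJ, hR, by linarith, ?_⟩
  linarith [hPJ.norm_comp_add_comp_sub_le_of_net hR hδ3.le hs hsδ]

theorem norm_inv_norm_smul_sub {E : Type*} [NormedAddCommGroup E] [NormedSpace 𝕜 E] {v : E}
    (hv : v ≠ 0) (hv1 : ‖v‖ ≤ 1) : ‖((‖v‖⁻¹ : ℝ) : 𝕜) • v - v‖ = 1 - ‖v‖ := by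
  have hpos : 0 < ‖v‖ := norm_pos_iff.2 hv
  have hinv : 1 ≤ ‖v‖⁻¹ := (one_le_inv₀ hpos).2 hv1
  calc ‖((‖v‖⁻¹ : ℝ) : 𝕜) • v - v‖ = ‖((‖v‖⁻¹ - 1 : ℝ) : 𝕜) • v‖ := by
        simp only [RCLike.ofReal_sub, RCLike.ofReal_one, sub_smul, one_smul]
    _ = (‖v‖⁻¹ - 1) * ‖v‖ := by
        rw [norm_smul, RCLike.norm_ofReal, abs_of_nonneg (by linarith)]
    _ = 1 - ‖v‖ := by rw [sub_mul, inv_mul_cancel₀ hpos.ne', one_mul]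

theorem BPBpCompactWith.exists_of_norm_le_one {η : ℝ → ℝ} (h : BPBpCompactWith 𝕜 X Y η)
    {ε θ : ℝ} (hε : 0 < ε) (hθη : θ ≤ η ε) (hθ1 : θ ≤ 1) {R : X →L[𝕜] Y}
    (hR : IsCompactOperator R) (hR1 : ‖R‖ ≤ 1) {x₀ : X} (hx₀ : ‖x₀‖ = 1) (hRx₀ : 1 - θ < ‖R x₀‖) :
    ∃ (S : X →L[𝕜] Y) (x₁ : X), IsCompactOperator S ∧ ‖S‖ = 1 ∧ ‖x₁‖ = 1 ∧ ‖S x₁‖ = 1 ∧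
      ‖x₀ - x₁‖ < ε ∧ ‖S - R‖ < ε + θ := by
  have hRx₀_le : ‖R x₀‖ ≤ ‖R‖ := R.unit_le_opNorm x₀ hx₀.le
  have hRpos : 0 < ‖R‖ := by linarith
  set R₁ : X →L[𝕜] Y := ((‖R‖⁻¹ : ℝ) : 𝕜) • R with hR₁
  have hR₁R : ‖R₁ - R‖ = 1 - ‖R‖ := norm_inv_norm_smul_sub (norm_pos_iff.1 hRpos) hR1
  have hR₁_norm : ‖R₁‖ = 1 := by
    rw [hR₁, norm_smul, RCLike.norm_ofReal, abs_of_pos (by positivity),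
      inv_mul_cancel₀ hRpos.ne']
  have hR₁x₀ : ‖R x₀‖ ≤ ‖R₁ x₀‖ := by
    rw [hR₁, smul_apply, norm_smul, RCLike.norm_ofReal,
      abs_of_pos (by positivity)]
    exact le_mul_of_one_le_left (norm_nonneg _) ((one_le_inv₀ hRpos).2 hR1)
  obtain ⟨S, x₁, hS, hS1, hx₁, hSx₁, hx, hSR₁⟩ :=
    (h ε hε).2 R₁ (hR.smul _) hR₁_norm x₀ hx₀ (by linarith)
  refine ⟨S, x₁, hS, hS1, hx₁, hSx₁, hx, ?_⟩
  linarith [norm_sub_le_norm_sub_add_norm_sub S R₁ R]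

theorem HasPeakSplicings.bpbpCompact [CompleteSpace Y] (hZ : HasPeakSplicings 𝕜 X Y Z)
    (h : BPBpCompact 𝕜 X Y) : BPBpCompact 𝕜 X Z := by
  obtain ⟨η, hη⟩ := h
  refine ⟨fun ε => min (η (ε / 2)) (min 1 (ε / 3)) / 2, fun ε hε => ?_⟩
  have hε2 : 0 < ε / 2 := half_pos hε
  have hη0 : 0 < η (ε / 2) := (hη _ hε2).1
  set θ := min (η (ε / 2)) (min 1 (ε / 3))
  have hθ0 : 0 < θ := by positivity
  have hθη : θ ≤ η (ε / 2) := min_le_left _ _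
  have hθ1 : θ ≤ 1 := (min_le_right _ _).trans (min_le_left _ _)
  have hθε : θ ≤ ε / 3 := (min_le_right _ _).trans (min_le_right _ _)
  refine ⟨half_pos hθ0, fun T hT hT1 x₀ hx₀ hTx₀ => ?_⟩
  have hTx₀0 : T x₀ ≠ 0 := norm_pos_iff.1 (by linarith)
  obtain ⟨R, P, J, hPJ, hR, hpeak, happrox⟩ :=
    hZ.exists_norm_comp_add_comp_sub_le hT hTx₀0 (half_pos hθ0)
  have hRc : IsCompactOperator R := isCompactOperator_of_norm_le hT hR
  have hR1 : ‖R‖ ≤ 1 := ContinuousLinearMap.opNorm_le_of_unit_norm zero_le_one fun x hx =>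
    (hR x).trans (hT1 ▸ T.unit_le_opNorm x hx.le)
  obtain ⟨S, x₁, hS, hS1, hx₁, hSx₁, hx, hSR⟩ :=
    hη.exists_of_norm_le_one hε2 hθη hθ1 hRc hR1 hx₀ (by linarith)
  have hnorm_le : ‖P ∘L T + J ∘L S‖ ≤ 1 := by
    simpa [hT1, hS1] using hPJ.norm_comp_add_comp_le T S
  have hle_norm : 1 ≤ ‖(P ∘L T + J ∘L S) x₁‖ := hSx₁ ▸ hPJ.le_norm (T x₁) (S x₁)
  have happly_le := (P ∘L T + J ∘L S).unit_le_opNorm x₁ hx₁.le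
  refine ⟨P ∘L T + J ∘L S, x₁, (hT.clm_comp P).add (hS.clm_comp J), by linarith, hx₁,
    by linarith, by linarith, ?_⟩
  linarith [hPJ.norm_comp_add_comp_sub_le T R S]

end Splicing

section ContinuousFunctions

variable {𝕜 : Type*} [RCLike 𝕜] {X Y K : Type*} [NormedAddCommGroup X] [NormedSpace 𝕜 X]
  [NormedAddCommGroup Y] [NormedSpace 𝕜 Y] [TopologicalSpace K]

theorem norm_one_sub_smul_add_smul_le_max {a : ℝ} (ha : a ∈ Set.Icc (0 : ℝ) 1) (z y : Y) :
    ‖(1 - a : 𝕜) • z + (a : 𝕜) • y‖ ≤ max ‖z‖ ‖y‖ := by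
  have ha' : 0 ≤ 1 - a := sub_nonneg.2 ha.2
  calc ‖(1 - a : 𝕜) • z + (a : 𝕜) • y‖ ≤ ‖(1 - a : 𝕜) • z‖ + ‖(a : 𝕜) • y‖ := norm_add_le _ _
    _ = (1 - a) * ‖z‖ + a * ‖y‖ := by
        rw [norm_smul, norm_smul, ← RCLike.ofReal_one, ← RCLike.ofReal_sub,
          RCLike.norm_of_nonneg ha', RCLike.norm_of_nonneg ha.1]
    _ ≤ (1 - a) * max ‖z‖ ‖y‖ + a * max ‖z‖ ‖y‖ := by
        gcongr
        exacts [le_max_left _ _, ha.1, le_max_right _ _]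
    _ = max ‖z‖ ‖y‖ := by ring

theorem exists_continuousMap_Icc_eq_one_mul_le (g : C(K, ℝ)) (hg : ∀ t, 0 ≤ g t) {t₀ : K}
    (ht₀ : g t₀ = 0) {δ : ℝ} (hδ : 0 < δ) :
    ∃ φ : C(K, ℝ), (∀ t, φ t ∈ Set.Icc (0 : ℝ) 1) ∧ φ t₀ = 1 ∧ ∀ t, φ t * g t ≤ δ := by
  refine ⟨⟨fun t => max 0 (1 - g t / δ), by fun_prop⟩, fun t => ⟨le_max_left _ _, ?_⟩,
    by simp [ht₀], fun t => ?_⟩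
  · exact max_le zero_le_one (sub_le_self _ (div_nonneg (hg t) hδ.le))
  · change max 0 (1 - g t / δ) * g t ≤ δ
    rw [max_mul_of_nonneg _ _ (hg t), zero_mul]
    refine max_le hδ.le ?_
    have hexpand : (1 - g t / δ) * g t = g t - g t ^ 2 / δ := by ring
    rw [hexpand, sub_le_iff_le_add, ← sub_le_iff_le_add', le_div_iff₀ hδ]
    nlinarith [sq_nonneg (g t - δ), hg t]

variable [CompactSpace K]

theorem exists_isSplicing_continuousMap {φ : C(K, ℝ)} (hφ : ∀ t, φ t ∈ Set.Icc (0 : ℝ) 1)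
    {t₀ : K} (hφt₀ : φ t₀ = 1) :
    ∃ (P : C(K, Y) →L[𝕜] C(K, Y)) (J : Y →L[𝕜] C(K, Y)), IsSplicing P J ∧
      ∀ z y t, (P z + J y) t = (1 - φ t : 𝕜) • z t + (φ t : 𝕜) • y := by
  let ψ : C(K, 𝕜) := ⟨fun t => (φ t : 𝕜), by fun_prop⟩
  let P : C(K, Y) →ₗ[𝕜] C(K, Y) :=
    { toFun z := (1 - ψ) • z
      map_add' := smul_add _
      map_smul' c z := by ext t; simp [smul_comm c] }
  let J : Y →ₗ[𝕜] C(K, Y) :=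
    { toFun y := ψ • ContinuousMap.const K y
      map_add' y y' := by ext t; simp
      map_smul' c y := by ext t; simp [smul_comm c] }
  have hPJ (z y t) : (P z + J y) t = (1 - φ t : 𝕜) • z t + (φ t : 𝕜) • y := rfl
  have hPJ_norm (z y) : ‖P z + J y‖ ≤ max ‖z‖ ‖y‖ := by
    refine (ContinuousMap.norm_le _ (le_max_of_le_left (norm_nonneg _))).2 fun t => ?_
    rw [hPJ]
    exact (norm_one_sub_smul_add_smul_le_max (hφ t) _ _).trans
      (max_le_max_right _ (z.norm_coe_le_norm t))
  refine ⟨P.mkContinuous 1 fun z => by simpa using hPJ_norm z 0,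
    J.mkContinuous 1 fun y => by simpa using hPJ_norm 0 y, ⟨fun z y => ?_, hPJ_norm⟩, hPJ⟩
  calc ‖y‖ = ‖(P z + J y) t₀‖ := by rw [hPJ, hφt₀]; simp
    _ ≤ ‖P z + J y‖ := (P z + J y).norm_coe_le_norm t₀

theorem hasPeakSplicings_continuousMap : HasPeakSplicings 𝕜 X Y C(K, Y) := by
  intro T _ x₀ hx₀ s δ hδ
  obtain ⟨t₀, ht₀⟩ : ∃ t₀, ‖T x₀‖ - δ < ‖T x₀ t₀‖ := by
    by_contra! hle
    refine (max_lt (norm_pos_iff.2 hx₀) (sub_lt_self _ hδ)).not_ge ?_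
    exact (ContinuousMap.norm_le _ (le_max_left _ _)).2 fun t => (hle t).trans (le_max_right _ _)
  let g : C(K, ℝ) := ⟨fun t => ∑ x ∈ s, ‖T x t₀ - T x t‖, by fun_prop⟩
  obtain ⟨φ, hφ, hφt₀, hφg⟩ := exists_continuousMap_Icc_eq_one_mul_le g
    (fun t => Finset.sum_nonneg fun x _ => norm_nonneg _) (t₀ := t₀) (by simp [g]) hδ
  obtain ⟨P, J, hPJ, hPJ_apply⟩ := exists_isSplicing_continuousMap (𝕜 := 𝕜) (Y := Y) hφ hφt₀
  refine ⟨ContinuousMap.evalCLM 𝕜 t₀ ∘L T, P, J, hPJ, fun x => (T x).norm_coe_le_norm t₀,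
    ht₀.le, fun x hx => (ContinuousMap.norm_le _ hδ.le).2 fun t => ?_⟩
  calc ‖(P (T x) + J (T x t₀) - T x) t‖ = ‖(φ t : 𝕜) • (T x t₀ - T x t)‖ := by
        rw [ContinuousMap.sub_apply, hPJ_apply, sub_smul, smul_sub, one_smul]
        congr 1; abel
    _ = φ t * ‖T x t₀ - T x t‖ := by rw [norm_smul, RCLike.norm_of_nonneg (hφ t).1]
    _ ≤ φ t * g t := by
        gcongr
        · exact (hφ t).1
        · exact Finset.single_le_sum (f := fun x => ‖T x t₀ - T x t‖)
            (fun _ _ => norm_nonneg _) hx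
    _ ≤ δ := hφg t

end ContinuousFunctions

section EssentiallyBoundedFunctions

variable {Ω : Type*}

theorem secondCountableTopology_induced_of_isSeparable_range {Y : Type*} [TopologicalSpace Y]
    [TopologicalSpace.PseudoMetrizableSpace Y] {f : Ω → Y}
    (hf : TopologicalSpace.IsSeparable (Set.range f)) :
    @SecondCountableTopology Ω (.induced f inferInstance) := by
  let := TopologicalSpace.pseudoMetrizableSpacePseudoMetric Y
  have := hf.secondCountableTopology
  have := TopologicalSpace.secondCountableTopology_induced Ω (Set.range f)
    (Set.rangeFactorization f)
  rwa [instTopologicalSpaceSubtype, induced_compose] at this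

variable [MeasurableSpace Ω] {μ : Measure Ω}

theorem exists_neBot_le_ae_tendsto {ι Y : Type*} [Countable ι] [TopologicalSpace Y]
    [TopologicalSpace.PseudoMetrizableSpace Y] {f : ι → Ω → Y}
    (hf : ∀ i, TopologicalSpace.IsSeparable (Set.range (f i))) {A : Set Ω} (hA : μ A ≠ 0) :
    ∃ ℓ : Filter Ω, ℓ.NeBot ∧ ℓ ≤ ae μ ∧ A ∈ ℓ ∧ ∀ i, ∃ y, Tendsto (f i) ℓ (𝓝 y) := by
  let : TopologicalSpace Ω := ⨅ i, .induced (f i) inferInstance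
  have : SecondCountableTopology Ω := TopologicalSpace.secondCountableTopology_iInf fun i =>
    secondCountableTopology_induced_of_isSeparable_range (hf i)
  have hcont (i) : Continuous (f i) := continuous_iInf_dom continuous_induced_dom
  obtain ⟨t, -, ht⟩ := exists_mem_forall_mem_nhdsWithin_pos_measure hA
  refine ⟨𝓝[A] t ⊓ ae μ, ?_, inf_le_right, mem_inf_of_left self_mem_nhdsWithin,
    fun i => ⟨f i t, ((hcont i).tendsto t).mono_left (inf_le_left.trans nhdsWithin_le_nhds)⟩⟩
  refine inf_neBot_iff.2 fun U hU V hV => ?_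
  have hUV : μ (U ∩ V) ≠ 0 := by
    rw [measure_inter_conull hV]
    exact (ht U hU).ne'
  exact nonempty_of_measure_ne_zero hUV

variable {Y : Type*} [NormedAddCommGroup Y]

theorem ae_norm_le_norm_Lp_top (f : Lp Y ⊤ μ) : ∀ᵐ t ∂μ, ‖f t‖ ≤ ‖f‖ := by
  simpa only [Lp.norm_def, toReal_eLpNorm (Lp.aestronglyMeasurable f)]
    using ae_le_lpNorm_exponent_top (Lp.memLp f)

theorem norm_Lp_top_le_of_ae_le {f : Lp Y ⊤ μ} {C : ℝ} (hC : 0 ≤ C)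
    (h : ∀ᵐ t ∂μ, ‖f t‖ ≤ C) : ‖f‖ ≤ C := by
  rw [Lp.norm_def, eLpNorm_exponent_top]
  exact ENNReal.toReal_le_of_le_ofReal hC (eLpNormEssSup_le_of_ae_bound h)

theorem measure_lt_norm_Lp_top_ne_zero {f : Lp Y ⊤ μ} {C : ℝ} (hC : 0 ≤ C) (hf : C < ‖f‖) :
    μ {t | C < ‖f t‖} ≠ 0 := by
  intro h0
  refine hf.not_ge (norm_Lp_top_le_of_ae_le hC ?_)
  simpa only [ae_iff, not_le] using h0

theorem exists_neBot_le_ae_cauchy_map_Lp_top {Z : Set (Lp Y ⊤ μ)}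
    (hZ : TopologicalSpace.IsSeparable Z) {A : Set Ω} (hA : μ A ≠ 0) :
    ∃ ℓ : Filter Ω, ℓ.NeBot ∧ ℓ ≤ ae μ ∧ A ∈ ℓ ∧ ∀ z ∈ Z, Cauchy (map z ℓ) := by
  obtain ⟨D, hD, hZD⟩ := hZ
  have := hD.to_subtype
  obtain ⟨ℓ, hne, hae, hAℓ, hlim⟩ := exists_neBot_le_ae_tendsto (f := fun d : D => (d : Lp Y ⊤ μ))
    (fun d => (Lp.stronglyMeasurable d.1).isSeparable_range) hA
  refine ⟨ℓ, hne, hae, hAℓ, fun z hz => ?_⟩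
  refine Metric.cauchy_iff.2 ⟨inferInstance, fun ε hε => ?_⟩
  have hε4 : 0 < ε / 4 := by positivity
  obtain ⟨d, hd, hzd⟩ := Metric.mem_closure_iff.1 (hZD hz) (ε / 4) hε4
  obtain ⟨y, hy⟩ := hlim ⟨d, hd⟩
  have hnear : ∀ᶠ t in ℓ, dist (z t) y < ε / 2 := by
    filter_upwards [hy.eventually (Metric.ball_mem_nhds y hε4),
      hae (ae_norm_le_norm_Lp_top (z - d)), hae (Lp.coeFn_sub z d)] with t hdy hle hsub
    rw [hsub, Pi.sub_apply, ← dist_eq_norm, ← dist_eq_norm] at hle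
    linarith [dist_triangle (z t) (d t) y, Metric.mem_ball.1 hdy]
  exact ⟨Metric.ball y (ε / 2), hnear, fun a ha b hb => by
    linarith [dist_triangle_right a b y, Metric.mem_ball.1 ha, Metric.mem_ball.1 hb]⟩

variable {𝕜 : Type*} [RCLike 𝕜] [NormedSpace 𝕜 Y]

theorem exists_clm_tendsto_Lp_top {X : Type*} [NormedAddCommGroup X] [NormedSpace 𝕜 X]
    {T : X →L[𝕜] Lp Y ⊤ μ} {ℓ : Filter Ω} [ℓ.NeBot] (hℓ : ℓ ≤ ae μ)
    (hT : ∀ x, ∃ y, Tendsto (T x) ℓ (𝓝 y)) :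
    ∃ R : X →L[𝕜] Y, (∀ x, ‖R x‖ ≤ ‖T x‖) ∧ ∀ x, Tendsto (T x) ℓ (𝓝 (R x)) := by
  choose R hR using hT
  have hadd (x x') : R (x + x') = R x + R x' := by
    refine tendsto_nhds_unique (hR _) (((hR x).add (hR x')).congr' ?_)
    rw [map_add]
    exact ((Lp.coeFn_add (T x) (T x')).filter_mono hℓ).symm
  have hsmul (c : 𝕜) (x) : R (c • x) = c • R x := by
    refine tendsto_nhds_unique (hR _) (((hR x).const_smul c).congr' ?_)
    rw [map_smul]
    exact ((Lp.coeFn_smul c (T x)).filter_mono hℓ).symm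
  have hbound (x) : ‖R x‖ ≤ ‖T x‖ := le_of_tendsto (hR x).norm (hℓ (ae_norm_le_norm_Lp_top (T x)))
  exact ⟨LinearMap.mkContinuous ⟨⟨R, hadd⟩, hsmul⟩ ‖T‖ fun x => (hbound x).trans (T.le_opNorm x),
    hbound, hR⟩

theorem exists_clm_Lp_top_ae_eq {E : Type*} [NormedAddCommGroup E] [NormedSpace 𝕜 E]
    {F : E → Ω → Y} (hF : ∀ e, AEStronglyMeasurable (F e) μ)
    (hadd : ∀ e e', F (e + e') =ᵐ[μ] F e + F e') (hsmul : ∀ (c : 𝕜) e, F (c • e) =ᵐ[μ] c • F e)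
    (hbound : ∀ e, ∀ᵐ t ∂μ, ‖F e t‖ ≤ ‖e‖) :
    ∃ L : E →L[𝕜] Lp Y ⊤ μ, ∀ e, L e =ᵐ[μ] F e := by
  have hF' (e) : MemLp (F e) ⊤ μ := memLp_top_of_bound (hF e) _ (hbound e)
  let L : E →ₗ[𝕜] Lp Y ⊤ μ :=
    { toFun e := (hF' e).toLp
      map_add' e e' := MemLp.toLp_congr _ ((hF' e).add (hF' e')) (hadd e e')
      map_smul' c e := MemLp.toLp_congr _ ((hF' e).const_smul c) (hsmul c e) }
  have hL (e) : L e =ᵐ[μ] F e := (hF' e).coeFn_toLp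
  refine ⟨L.mkContinuous 1 fun e => ?_, hL⟩
  rw [one_mul]
  refine norm_Lp_top_le_of_ae_le (norm_nonneg e) ?_
  filter_upwards [hL e, hbound e] with t ht hle using ht ▸ hle

theorem exists_clm_Lp_top_ae_eq_indicator {B : Set Ω} (hB : MeasurableSet B) :
    ∃ P : Lp Y ⊤ μ →L[𝕜] Lp Y ⊤ μ, ∀ z, P z =ᵐ[μ] B.indicator z := by
  refine exists_clm_Lp_top_ae_eq (fun z => (Lp.aestronglyMeasurable z).indicator hB)
    (fun z z' => ?_) (fun c z => ?_) (fun z => ?_)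
  · exact (Lp.coeFn_add z z').indicator.trans (.of_eq (Set.indicator_add B z z'))
  · exact (Lp.coeFn_smul c z).indicator.trans (.of_eq (Set.indicator_const_smul B c z))
  · filter_upwards [ae_norm_le_norm_Lp_top z] with t ht
    exact (norm_indicator_le_norm_self _ _).trans ht

theorem exists_clm_Lp_top_ae_eq_indicator_const {B : Set Ω} (hB : MeasurableSet B) :
    ∃ J : Y →L[𝕜] Lp Y ⊤ μ, ∀ y, J y =ᵐ[μ] B.indicator fun _ => y :=
  exists_clm_Lp_top_ae_eq (fun _ => aestronglyMeasurable_const.indicator hB)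
    (fun y y' => .of_eq (Set.indicator_add B (fun _ => y) fun _ => y'))
    (fun c y => .of_eq (Set.indicator_const_smul B c fun _ => y))
    (fun y => .of_forall fun _ => norm_indicator_le_norm_self (fun _ => y) _)

theorem exists_isSplicing_Lp_top {B : Set Ω} (hB : MeasurableSet B) (hμB : μ B ≠ 0) :
    ∃ (P : Lp Y ⊤ μ →L[𝕜] Lp Y ⊤ μ) (J : Y →L[𝕜] Lp Y ⊤ μ), IsSplicing P J ∧
      ∀ z y, ∀ᵐ t ∂μ, (t ∈ B → (P z + J y) t = y) ∧ (t ∉ B → (P z + J y) t = z t) := by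
  obtain ⟨P, hP⟩ := exists_clm_Lp_top_ae_eq_indicator (𝕜 := 𝕜) (Y := Y) (μ := μ) hB.compl
  obtain ⟨J, hJ⟩ := exists_clm_Lp_top_ae_eq_indicator_const (𝕜 := 𝕜) (Y := Y) (μ := μ) hB
  have hPJ (z y) : ∀ᵐ t ∂μ,
      (t ∈ B → (P z + J y) t = y) ∧ (t ∉ B → (P z + J y) t = z t) := by
    filter_upwards [hP z, hJ y, Lp.coeFn_add (P z) (J y)] with t hPt hJt hadd
    rw [hadd, Pi.add_apply, hPt, hJt]
    exact ⟨fun ht => by simp [ht], fun ht => by simp [ht]⟩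
  refine ⟨P, J, ⟨fun z y => ?_, fun z y => ?_⟩, hPJ⟩
  · have hfreq : ∃ᵐ t ∂μ, t ∈ B := frequently_ae_mem_iff.2 hμB
    obtain ⟨t, htB, ht, hle⟩ :=
      (hfreq.and_eventually ((hPJ z y).and (ae_norm_le_norm_Lp_top (P z + J y)))).exists
    rwa [ht.1 htB] at hle
  · refine norm_Lp_top_le_of_ae_le (le_max_of_le_left (norm_nonneg z)) ?_
    filter_upwards [hPJ z y, ae_norm_le_norm_Lp_top z] with t ht hz
    by_cases htB : t ∈ B
    · exact (ht.1 htB).symm ▸ le_max_right _ _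
    · exact (ht.2 htB).symm ▸ le_max_of_le_left hz

theorem hasPeakSplicings_Lp_top {X : Type*} [NormedAddCommGroup X] [NormedSpace 𝕜 X]
    [CompleteSpace Y] : HasPeakSplicings 𝕜 X Y (Lp Y ⊤ μ) := by
  intro T hT x₀ hx₀ s δ hδ
  have hA : μ {t | max 0 (‖T x₀‖ - δ) < ‖T x₀ t‖} ≠ 0 :=
    measure_lt_norm_Lp_top_ne_zero (le_max_left _ _)
      (max_lt (norm_pos_iff.2 hx₀) (sub_lt_self _ hδ))
  obtain ⟨ℓ, hne, hae, hAℓ, hcauchy⟩ :=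
    exists_neBot_le_ae_cauchy_map_Lp_top (isSeparable_range_of_isCompactOperator hT) hA
  obtain ⟨R, hR, hRlim⟩ := exists_clm_tendsto_Lp_top hae
    fun x => cauchy_map_iff_exists_tendsto.1 (hcauchy (T x) ⟨x, rfl⟩)
  let B : Set Ω := {t | ∀ x ∈ s, ‖T x t - R x‖ < δ}
  have hB : MeasurableSet B := by
    simp only [B, Set.ofPred_forall]
    exact s.measurableSet_biInter fun x _ => measurableSet_lt
      ((Lp.stronglyMeasurable (T x)).sub stronglyMeasurable_const).norm.measurable
      measurable_const
  have hBℓ : ∀ᶠ t in ℓ, t ∈ B := (eventually_all_finset s).2 fun x _ => by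
    simpa only [dist_eq_norm] using (hRlim x).eventually (Metric.ball_mem_nhds (R x) hδ)
  have hμB : μ B ≠ 0 := frequently_ae_mem_iff.1 (hBℓ.frequently.filter_mono hae)
  obtain ⟨P, J, hPJ, hPJ_ae⟩ := exists_isSplicing_Lp_top (𝕜 := 𝕜) (Y := Y) hB hμB
  refine ⟨R, P, J, hPJ, hR, ?_, fun x hx => norm_Lp_top_le_of_ae_le hδ.le ?_⟩
  · have hpeak : ∀ᶠ t in ℓ, max 0 (‖T x₀‖ - δ) < ‖T x₀ t‖ := hAℓ
    exact ge_of_tendsto (hRlim x₀).norm (hpeak.mono fun t ht => (le_max_right _ _).trans ht.le)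
  · filter_upwards [hPJ_ae (T x) (R x), Lp.coeFn_sub (P (T x) + J (R x)) (T x)] with t ht hsub
    rw [hsub, Pi.sub_apply]
    by_cases htB : t ∈ B
    · rw [ht.1 htB, norm_sub_rev]
      exact (htB x hx).le
    · rw [ht.2 htB, sub_self, norm_zero]
      exact hδ.le

end EssentiallyBoundedFunctions

theorem bpbp_compact_Linfty_and_CK_general {𝕜 : Type*} [RCLike 𝕜] {X Y : Type*}
    [NormedAddCommGroup X] [NormedSpace 𝕜 X]
    [NormedAddCommGroup Y] [NormedSpace 𝕜 Y] [CompleteSpace Y]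
    (h : BPBpCompact 𝕜 X Y)
    {Ω : Type*} [MeasurableSpace Ω] (μ : Measure Ω)
    (K : Type*) [TopologicalSpace K] [CompactSpace K] :
    BPBpCompact 𝕜 X (Lp Y ⊤ μ) ∧ BPBpCompact 𝕜 X C(K, Y) :=
  ⟨hasPeakSplicings_Lp_top.bpbpCompact h, hasPeakSplicings_continuousMap.bpbpCompact h⟩

/-- Theorem 3.14 (b) and (c): the BPBp for compact operators passes from (X, Y) to
(X, L_∞(μ, Y)) for σ-finite μ and to (X, C(K, Y)) for K compact Hausdorff. -/
theorem bpbp_compact_Linfty_and_CK {𝕜 : Type*} [RCLike 𝕜] {X Y : Type*}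
    [NormedAddCommGroup X] [NormedSpace 𝕜 X] [CompleteSpace X]
    [NormedAddCommGroup Y] [NormedSpace 𝕜 Y] [CompleteSpace Y]
    (h : BPBpCompact 𝕜 X Y)
    {Ω : Type*} [MeasurableSpace Ω] (μ : MeasureTheory.Measure Ω)
    [MeasureTheory.SigmaFinite μ]
    (K : Type*) [TopologicalSpace K] [CompactSpace K] [T2Space K] :
    BPBpCompact 𝕜 X (MeasureTheory.Lp Y ⊤ μ) ∧
    BPBpCompact 𝕜 X C(K, Y) := by
  exact bpbp_compact_Linfty_and_CK_general h μ K
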